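/- For all reals δ ≥ 0 and C ≥ 1 there exists D ≥ 0 (depending only on δ and C) such that the following holds. Let X be a geodesic δ-hyperbolic metric space, and let μ and ν be two C-coarse medians on X. Then dist(μ(x,y,z), ν(x,y,z)) ≤ D for all x, y, z ∈ X. In particular, every geodesic hyperbolic metric space has a unique coarse median structure. -/

import Mathlib

open Metric Set

universe u

/-- A `C`-coarse median on a metric space `X`. -/
def IsCoarseMedian {X : Type*} [MetricSpace X] (C : ℝ) (μ : X → X → X → X) : Prop :=
  (∀ x y z : X, μ x y z = μ y x z) ∧
  (∀ x y z : X, μ x y z = μ x z y) ∧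
  (∀ x y : X, μ x x y = x) ∧
  (∀ x y z w : X, dist (μ (μ x w y) w z) (μ x w (μ y w z)) ≤ C) ∧
  (∀ x y z w : X, dist (μ x y z) (μ w y z) ≤ C * dist x w + C)

/-- The coarse median interval `[x,y]_μ = {μ x y z : z ∈ X}`. -/
def cmInterval {X : Type*} [MetricSpace X] (μ : X → X → X → X) (x y : X) : Set X :=
  {w : X | ∃ z : X, μ x y z = w}

/-- The closed `R`-neighbourhood `{x : dist(x, A) ≤ R}` of a set. -/
def closedNbhd {X : Type*} [MetricSpace X] (R : ℝ) (A : Set X) : Set X :=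
  {x : X | Metric.infDist x A ≤ R}

/-- `A` is `D`-quasiconvex with respect to the coarse median `μ`. -/
def IsCMQuasiconvex {X : Type*} [MetricSpace X] (μ : X → X → X → X) (D : ℝ) (A : Set X) :
    Prop :=
  ∀ a₁ ∈ A, ∀ a₂ ∈ A, cmInterval μ a₁ a₂ ⊆ closedNbhd D A

/-- A metric space is geodesic if any two points are joined by an isometrically embedded
compact real interval. -/
def IsGeodesicSpace (X : Type*) [MetricSpace X] : Prop :=
  ∀ x y : X, ∃ γ : ℝ → X, γ 0 = x ∧ γ (dist x y) = y ∧
    ∀ s ∈ Set.Icc (0 : ℝ) (dist x y), ∀ t ∈ Set.Icc (0 : ℝ) (dist x y),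
      dist (γ s) (γ t) = |s - t|

/-- An `(L, A)`-quasigeodesic from `x` to `y`, defined on the interval `[a, b]`. -/
def IsQuasigeodesicOn {X : Type*} [MetricSpace X] (L A a b : ℝ) (γ : ℝ → X) (x y : X) :
    Prop :=
  a ≤ b ∧ γ a = x ∧ γ b = y ∧
    ∀ s ∈ Set.Icc a b, ∀ t ∈ Set.Icc a b,
      |s - t| / L - A ≤ dist (γ s) (γ t) ∧ dist (γ s) (γ t) ≤ L * |s - t| + A

/-- The Gromov product `⟨y,z⟩_x`. -/
noncomputable def gromovProd {X : Type*} [MetricSpace X] (x y z : X) : ℝ :=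
  (dist x y + dist x z - dist y z) / 2

/-- `X` is `δ`-hyperbolic (four-point condition on Gromov products). -/
def IsDeltaHyperbolic (X : Type*) [MetricSpace X] (δ : ℝ) : Prop :=
  ∀ w x y z : X, min (gromovProd w x y) (gromovProd w y z) ≤ gromovProd w x z + δ

/-!
For fixed `x` and `y` the map `f = μ x y` is a coarse Lipschitz retraction fixing `x` and `y`, and
such a map displaces the points of a geodesic from `x` to `y` by a bounded amount. Indeed, let `B`
bound the displacement and let `p` be a point of the geodesic, at distance at least `d` from the
image of `f`. Follow the geodesic from `p` for time `2 * B` in both directions and cut the piece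
obtained into `2 ^ k` parts. Their images under `f` have diameter about `4 * C * B / 2 ^ k`, so the
four-point condition along this chain bounds `d` by `2 * C * B / 2 ^ k` plus a constant. As the
displacement of `p` is at most about `(C + 1) * d`, a suitable `k` depending only on `C` gives a
bound `(B + K) / 2`, whence `B ≤ K` for the optimal `B`.

The Gromov center `q` of `x`, `y`, `z`, the point of a geodesic from `x` to `y` at distance
`gromovProd x y z` from `x`, is close to all three sides, so it is almost fixed by `μ x y`, `μ x z`
and `μ y z`. Coarse associativity of the binary operations `μ w` then forces `q` to be close to
`μ x y z`, for every coarse median `μ`.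
-/

section Geodesics

variable {X : Type*} [PseudoMetricSpace X] {γ : ℝ → X} {a b s t : ℝ}

/-- `γ` restricts to a geodesic on `I`, that is, to an isometric embedding of `I`; it is
unconstrained outside `I`. -/
def IsGeodesicOn (γ : ℝ → X) (I : Set ℝ) : Prop :=
  ∀ s ∈ I, ∀ t ∈ I, dist (γ s) (γ t) = |s - t|

lemma IsGeodesicOn.dist_eq_sub (hγ : IsGeodesicOn γ (Icc a b)) (has : a ≤ s) (hst : s ≤ t)
    (htb : t ≤ b) : dist (γ s) (γ t) = t - s := by
  rw [hγ s ⟨has, hst.trans htb⟩ t ⟨has.trans hst, htb⟩, abs_sub_comm,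
    abs_of_nonneg (sub_nonneg.2 hst)]

lemma IsGeodesicOn.dist_endpoints {L : ℝ} (hγ : IsGeodesicOn γ (Icc 0 L)) (hL : 0 ≤ L) :
    dist (γ 0) (γ L) = L := by
  rw [hγ.dist_eq_sub le_rfl hL le_rfl, sub_zero]

end Geodesics

lemma IsGeodesicSpace.exists_isGeodesicOn {X : Type*} [MetricSpace X] (hG : IsGeodesicSpace X)
    (x y : X) :
    ∃ (L : ℝ) (γ : ℝ → X), 0 ≤ L ∧ γ 0 = x ∧ γ L = y ∧ IsGeodesicOn γ (Icc 0 L) :=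
  let ⟨γ, h0, hL, hγ⟩ := hG x y
  ⟨dist x y, γ, dist_nonneg, h0, hL, hγ⟩

section GromovProduct

variable {X : Type*} [MetricSpace X]

lemma gromovProd_comm (x y z : X) : gromovProd x y z = gromovProd x z y := by
  rw [gromovProd, gromovProd, dist_comm y z, add_comm (dist x y)]

lemma gromovProd_self_right (x y : X) : gromovProd x y y = dist x y := by
  rw [gromovProd, dist_self, sub_zero, add_self_div_two]

lemma gromovProd_nonneg (x y z : X) : 0 ≤ gromovProd x y z := by
  have := dist_triangle_left y z x
  unfold gromovProd
  linarith

lemma gromovProd_le_dist_left (x y z : X) : gromovProd x y z ≤ dist x y := by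
  have := dist_triangle x y z
  unfold gromovProd
  linarith

lemma gromovProd_le_dist_right (x y z : X) : gromovProd x y z ≤ dist x z :=
  gromovProd_comm x y z ▸ gromovProd_le_dist_left x z y

lemma IsGeodesicOn.gromovProd_eq_zero {γ : ℝ → X} {a b s t u : ℝ}
    (hγ : IsGeodesicOn γ (Icc a b)) (has : a ≤ s) (hst : s ≤ t) (htu : t ≤ u) (hub : u ≤ b) :
    gromovProd (γ t) (γ s) (γ u) = 0 := by
  rw [gromovProd, dist_comm (γ t) (γ s), hγ.dist_eq_sub has hst (htu.trans hub),
    hγ.dist_eq_sub (has.trans hst) htu hub, hγ.dist_eq_sub has (hst.trans htu) hub]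
  ring

end GromovProduct

namespace IsDeltaHyperbolic

variable {X : Type*} [MetricSpace X] {δ : ℝ}

lemma nonneg [Nonempty X] (hX : IsDeltaHyperbolic X δ) : 0 ≤ δ := by
  obtain ⟨w⟩ := ‹Nonempty X›
  simpa [gromovProd] using hX w w w w

lemma le_gromovProd_trans (hX : IsDeltaHyperbolic X δ) {q x y z : X} {m : ℝ}
    (hxy : m ≤ gromovProd q x y) (hyz : m ≤ gromovProd q y z) : m - δ ≤ gromovProd q x z :=
  sub_le_iff_le_add.2 ((le_min hxy hyz).trans (hX q x y z))

/-- The four-point condition along the chain of `2 ^ k` steps obtained by bisecting `[s, u]`, the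
weakest link of which is bounded below through `d` and the step size. -/
lemma le_gromovProd_of_coarse_lipschitz (hX : IsDeltaHyperbolic X δ) {q : X} {g : ℝ → X}
    {L A d s u : ℝ} (hsu : s ≤ u)
    (hg : ∀ a ∈ Icc s u, ∀ b ∈ Icc s u, dist (g a) (g b) ≤ L * |a - b| + A)
    (hd : ∀ a ∈ Icc s u, d ≤ dist q (g a)) (k : ℕ) :
    d - (L * ((u - s) / 2 ^ k) + A) / 2 - k * δ ≤ gromovProd q (g s) (g u) := by
  induction k generalizing s u with
  | zero =>
    have hs : s ∈ Icc s u := left_mem_Icc.2 hsu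
    have hu : u ∈ Icc s u := right_mem_Icc.2 hsu
    have hsu' := hg s hs u hu
    rw [abs_sub_comm, abs_of_nonneg (sub_nonneg.2 hsu)] at hsu'
    have := hd s hs
    have := hd u hu
    simp only [pow_zero, div_one, Nat.cast_zero, zero_mul, sub_zero, gromovProd]
    linarith
  | succ k ih =>
    let c := (s + u) / 2
    have hsc : s ≤ c := by simp only [c]; linarith
    have hcu : c ≤ u := by simp only [c]; linarith
    have hl : Icc s c ⊆ Icc s u := Icc_subset_Icc_right hcu
    have hr : Icc c u ⊆ Icc s u := Icc_subset_Icc_left hsc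
    have hleft := ih hsc (fun a ha b hb => hg a (hl ha) b (hl hb)) fun a ha => hd a (hl ha)
    have hright := ih hcu (fun a ha b hb => hg a (hr ha) b (hr hb)) fun a ha => hd a (hr ha)
    have hlen : (c - s) / 2 ^ k = (u - s) / 2 ^ (k + 1) := by
      simp only [c]
      field_simp
      ring
    have hlen' : (u - c) / 2 ^ k = (u - s) / 2 ^ (k + 1) := by
      simp only [c]
      field_simp
      ring
    rw [hlen] at hleft
    rw [hlen'] at hright
    have := hX.le_gromovProd_trans hleft hright
    push_cast
    linarith

lemma dist_geodesic_le (hX : IsDeltaHyperbolic X δ) {γ : ℝ → X} {L : ℝ} (hL : 0 ≤ L)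
    (hγ : IsGeodesicOn γ (Icc 0 L)) (q : X) :
    dist q (γ (gromovProd (γ 0) q (γ L))) ≤ gromovProd q (γ 0) (γ L) + 2 * δ := by
  have hdist := hγ.dist_endpoints hL
  have ht₀ := gromovProd_nonneg (γ 0) q (γ L)
  have htL := hdist ▸ gromovProd_le_dist_right (γ 0) q (γ L)
  set t := gromovProd (γ 0) q (γ L) with ht
  have h0t := hγ.dist_eq_sub le_rfl ht₀ htL
  have htL' := hγ.dist_eq_sub ht₀ htL le_rfl
  have hside : gromovProd (γ 0) (γ L) (γ t) = t := by
    rw [gromovProd, dist_comm (γ L), hdist, h0t, htL']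
    ring
  have hqt := hX.le_gromovProd_trans ht.le hside.ge
  rw [gromovProd, h0t, dist_comm (γ 0) q] at hqt
  rw [gromovProd, dist_comm (γ 0) q] at ht
  rw [gromovProd]
  linarith

lemma exists_gromovProd_le (hX : IsDeltaHyperbolic X δ) (hG : IsGeodesicSpace X) (x y z : X) :
    ∃ q, gromovProd q x y ≤ δ ∧ gromovProd q x z ≤ δ ∧ gromovProd q y z ≤ δ := by
  obtain ⟨L, γ, hL, rfl, rfl, hγ⟩ := hG.exists_isGeodesicOn x y
  have hdist := hγ.dist_endpoints hL
  have ht₀ := gromovProd_nonneg (γ 0) (γ L) z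
  have htL := hdist ▸ gromovProd_le_dist_left (γ 0) (γ L) z
  set t := gromovProd (γ 0) (γ L) z with ht
  have hxy : gromovProd (γ t) (γ 0) (γ L) = 0 := hγ.gromovProd_eq_zero le_rfl ht₀ htL le_rfl
  -- `t` is the parameter for which the Gromov products of `z` with the two endpoints agree.
  have heq : gromovProd (γ t) (γ 0) z = gromovProd (γ t) (γ L) z := by
    have h0t := hγ.dist_eq_sub le_rfl ht₀ htL
    have htL' := hγ.dist_eq_sub ht₀ htL le_rfl
    rw [gromovProd, hdist] at ht
    rw [gromovProd, gromovProd, dist_comm (γ t) (γ 0), h0t, htL']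
    linarith
  have hle : gromovProd (γ t) (γ L) z ≤ δ := by
    simpa [gromovProd_comm (γ t) z, heq, hxy] using hX (γ t) (γ 0) z (γ L)
  have : Nonempty X := ⟨z⟩
  exact ⟨γ t, hxy.trans_le hX.nonneg, heq.trans_le hle, hle⟩

end IsDeltaHyperbolic

/-- A `C`-coarse retraction: a coarse Lipschitz self-map which is coarsely idempotent, that is,
which coarsely fixes its range. The model is the projection `μ x y` to a median interval. -/
structure IsCoarseRetraction {X : Type*} [PseudoMetricSpace X] (C : ℝ) (f : X → X) : Prop where
  dist_le : ∀ z w, dist (f z) (f w) ≤ C * dist z w + C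
  dist_apply_apply_le : ∀ z, dist (f z) (f (f z)) ≤ C

/-- A bound for the displacement of a `C`-coarse retraction of a geodesic `δ`-hyperbolic space
along geodesics between fixed points. The logarithm is the least `k` with `4 * C * (C + 1) ≤ 2 ^ k`,
and the value is twice the constant in `IsCoarseRetraction.dist_apply_le_half_add`. -/
noncomputable def geodesicDisplacementBound (δ C : ℝ) : ℝ :=
  2 * ((C + 1) * (C / 2 + (Nat.clog 2 ⌈4 * C * (C + 1)⌉₊ + 2) * δ) + 2 * C)

namespace IsCoarseRetraction

section Displacement

variable {X : Type*} [PseudoMetricSpace X] {C : ℝ} {f : X → X}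

lemma nonneg [Nonempty X] (hf : IsCoarseRetraction C f) : 0 ≤ C := by
  obtain ⟨z⟩ := ‹Nonempty X›
  exact dist_nonneg.trans (hf.dist_apply_apply_le z)

lemma dist_apply_le_add (hf : IsCoarseRetraction C f) (q r : X) :
    dist q (f q) ≤ dist r (f r) + (C + 1) * dist q r + C := by
  have := dist_triangle4 q r (f r) (f q)
  have := hf.dist_le r q
  rw [dist_comm r q] at this
  linarith

lemma dist_apply_le_dist_range (hf : IsCoarseRetraction C f) (p z : X) :
    dist p (f p) ≤ (C + 1) * dist p (f z) + 2 * C := by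
  linarith [hf.dist_apply_le_add p (f z), hf.dist_apply_apply_le z]

end Displacement

variable {X : Type*} [MetricSpace X] {δ C : ℝ} {f : X → X}

lemma le_of_le_gromovProd_apply (hf : IsCoarseRetraction C f) (hX : IsDeltaHyperbolic X δ)
    {γ : ℝ → X} {s t u : ℝ} (hγ : IsGeodesicOn γ (Icc s u)) (hst : s ≤ t) (htu : t ≤ u) {d : ℝ}
    (hd : ∀ z, d ≤ dist (γ t) (f z)) (hs : d ≤ gromovProd (γ t) (γ s) (f (γ s)))
    (hu : d ≤ gromovProd (γ t) (γ u) (f (γ u))) (k : ℕ) :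
    d ≤ (C * ((u - s) / 2 ^ k) + C) / 2 + (k + 2) * δ := by
  have : Nonempty X := ⟨γ t⟩
  have hC := hf.nonneg
  have hδ := hX.nonneg
  have himage := hX.le_gromovProd_of_coarse_lipschitz (q := γ t) (g := fun r => f (γ r))
    (hst.trans htu) (fun r hr r' hr' => hγ r hr r' hr' ▸ hf.dist_le (γ r) (γ r'))
    (fun r _ => hd (γ r)) k
  set m := d - (C * ((u - s) / 2 ^ k) + C) / 2 - k * δ with hm
  have hmd : m ≤ d := by
    have : 0 ≤ C * ((u - s) / 2 ^ k) :=
      mul_nonneg hC (div_nonneg (sub_nonneg.2 (hst.trans htu)) (by positivity))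
    have : 0 ≤ k * δ := by positivity
    linarith
  have hchain : m - δ - δ ≤ gromovProd (γ t) (γ s) (γ u) := by
    refine hX.le_gromovProd_trans (hX.le_gromovProd_trans (hmd.trans hs) himage) ?_
    rw [gromovProd_comm]
    linarith
  rw [hγ.gromovProd_eq_zero le_rfl hst htu le_rfl] at hchain
  linarith

lemma le_of_forall_le_dist_range (hf : IsCoarseRetraction C f) (hX : IsDeltaHyperbolic X δ)
    {γ : ℝ → X} {a b : ℝ} (hγ : IsGeodesicOn γ (Icc a b)) (ha : f (γ a) = γ a)
    (hb : f (γ b) = γ b) {B : ℝ} (hB : ∀ r ∈ Icc a b, dist (γ r) (f (γ r)) ≤ B) {t d : ℝ}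
    (ht : t ∈ Icc a b) (hd : ∀ z, d ≤ dist (γ t) (f z)) (k : ℕ) :
    d ≤ 2 * C * B / 2 ^ k + C / 2 + (k + 2) * δ := by
  have : Nonempty X := ⟨γ t⟩
  have hC := hf.nonneg
  have hB0 : 0 ≤ B := dist_nonneg.trans (hB t ht)
  have hdB : d ≤ B := (hd (γ t)).trans (hB t ht)
  have hend : ∀ r ∈ Icc a b, f (γ r) = γ r ∨ 2 * B ≤ |t - r| →
      d ≤ gromovProd (γ t) (γ r) (f (γ r)) := by
    rintro r hr (hfix | hfar)
    · simpa only [hfix, gromovProd_self_right] using hd (γ r)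
    · rw [← hγ t ht r hr] at hfar
      have := hd (γ r)
      have := hB r hr
      unfold gromovProd
      linarith
  let s := max a (t - 2 * B)
  let u := min b (t + 2 * B)
  have hst : s ≤ t := max_le ht.1 (by linarith)
  have htu : t ≤ u := le_min ht.2 (by linarith)
  have hsub : Icc s u ⊆ Icc a b := Icc_subset_Icc (le_max_left _ _) (min_le_left _ _)
  have hs := hend s (hsub (left_mem_Icc.2 (hst.trans htu))) <| (max_choice a (t - 2 * B)).imp
    (fun h => by simp only [s, h, ha]) fun h => le_abs.2 (.inl (by simp only [s, h]; linarith))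
  have hu := hend u (hsub (right_mem_Icc.2 (hst.trans htu))) <| (min_choice b (t + 2 * B)).imp
    (fun h => by simp only [u, h, hb]) fun h => le_abs.2 (.inr (by simp only [u, h]; linarith))
  have hlen : u - s ≤ 4 * B := by
    linarith [le_max_right a (t - 2 * B), min_le_right b (t + 2 * B)]
  calc d ≤ (C * ((u - s) / 2 ^ k) + C) / 2 + (k + 2) * δ :=
        hf.le_of_le_gromovProd_apply hX (fun r hr r' hr' => hγ r (hsub hr) r' (hsub hr'))
          hst htu hd hs hu k
    _ ≤ (C * (4 * B / 2 ^ k) + C) / 2 + (k + 2) * δ := by gcongr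
    _ = 2 * C * B / 2 ^ k + C / 2 + (k + 2) * δ := by ring

lemma dist_apply_le_half_add (hf : IsCoarseRetraction C f) (hX : IsDeltaHyperbolic X δ)
    {γ : ℝ → X} {a b : ℝ} (hγ : IsGeodesicOn γ (Icc a b)) (ha : f (γ a) = γ a)
    (hb : f (γ b) = γ b) {B : ℝ} (hB : ∀ r ∈ Icc a b, dist (γ r) (f (γ r)) ≤ B) {k : ℕ}
    (hk : 4 * C * (C + 1) ≤ 2 ^ k) {t : ℝ} (ht : t ∈ Icc a b) :
    dist (γ t) (f (γ t)) ≤ B / 2 + ((C + 1) * (C / 2 + (k + 2) * δ) + 2 * C) := by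
  have : Nonempty X := ⟨γ t⟩
  have hC := hf.nonneg
  have hB0 : 0 ≤ B := dist_nonneg.trans (hB t ht)
  let d := (dist (γ t) (f (γ t)) - 2 * C) / (C + 1)
  have hd : ∀ z, d ≤ dist (γ t) (f z) := fun z => by
    rw [div_le_iff₀' (by positivity)]
    linarith [hf.dist_apply_le_dist_range (γ t) z]
  have hstep : (C + 1) * (2 * C * B / 2 ^ k) ≤ B / 2 := by
    rw [← mul_div_assoc, div_le_iff₀ (by positivity)]
    linarith [mul_le_mul_of_nonneg_right hk hB0]
  calc dist (γ t) (f (γ t)) = (C + 1) * d + 2 * C := by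
        simp only [d]
        field_simp
        ring
    _ ≤ (C + 1) * (2 * C * B / 2 ^ k + C / 2 + (k + 2) * δ) + 2 * C := by
        gcongr
        exact hf.le_of_forall_le_dist_range hX hγ ha hb hB ht hd k
    _ ≤ B / 2 + ((C + 1) * (C / 2 + (k + 2) * δ) + 2 * C) := by linarith

lemma dist_apply_geodesic_le (hf : IsCoarseRetraction C f) (hX : IsDeltaHyperbolic X δ)
    {γ : ℝ → X} {a b : ℝ} (hγ : IsGeodesicOn γ (Icc a b)) (ha : f (γ a) = γ a)
    (hb : f (γ b) = γ b) {t : ℝ} (ht : t ∈ Icc a b) :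
    dist (γ t) (f (γ t)) ≤ geodesicDisplacementBound δ C := by
  have : Nonempty X := ⟨γ t⟩
  have hC := hf.nonneg
  let φ : ℝ → ℝ := fun r => dist (γ r) (f (γ r))
  have hbdd : BddAbove (φ '' Icc a b) := by
    refine ⟨(C + 1) * (b - a) + C, ?_⟩
    rintro _ ⟨r, hr, rfl⟩
    calc φ r ≤ dist (γ a) (f (γ a)) + (C + 1) * dist (γ r) (γ a) + C := hf.dist_apply_le_add _ _
      _ = (C + 1) * (r - a) + C := by
        rw [ha, dist_self, dist_comm, hγ.dist_eq_sub le_rfl hr.1 hr.2, zero_add]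
      _ ≤ (C + 1) * (b - a) + C := by gcongr; exact hr.2
  have hle : ∀ r ∈ Icc a b, φ r ≤ sSup (φ '' Icc a b) := fun r hr =>
    le_csSup hbdd (mem_image_of_mem φ hr)
  have hk : 4 * C * (C + 1) ≤ 2 ^ Nat.clog 2 ⌈4 * C * (C + 1)⌉₊ :=
    (Nat.le_ceil _).trans (mod_cast Nat.le_pow_clog one_lt_two _)
  have hsup : sSup (φ '' Icc a b) ≤
      sSup (φ '' Icc a b) / 2 + geodesicDisplacementBound δ C / 2 := by
    refine csSup_le ⟨_, mem_image_of_mem φ ht⟩ ?_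
    rintro _ ⟨r, hr, rfl⟩
    rw [geodesicDisplacementBound, mul_div_cancel_left₀ _ two_ne_zero]
    exact hf.dist_apply_le_half_add hX hγ ha hb hle hk hr
  linarith [hle t ht]

lemma dist_apply_le_of_fixed (hf : IsCoarseRetraction C f) (hX : IsDeltaHyperbolic X δ)
    (hG : IsGeodesicSpace X) {x y : X} (hx : f x = x) (hy : f y = y) (q : X) :
    dist q (f q) ≤
      geodesicDisplacementBound δ C + (C + 1) * (gromovProd q x y + 2 * δ) + C := by
  obtain ⟨L, γ, hL, rfl, rfl, hγ⟩ := hG.exists_isGeodesicOn x y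
  have : Nonempty X := ⟨q⟩
  have hC := hf.nonneg
  have hdist := hγ.dist_endpoints hL
  have ht : gromovProd (γ 0) q (γ L) ∈ Icc 0 L :=
    ⟨gromovProd_nonneg _ _ _, (gromovProd_le_dist_right _ _ _).trans_eq hdist⟩
  refine (hf.dist_apply_le_add q (γ (gromovProd (γ 0) q (γ L)))).trans ?_
  gcongr
  · exact hf.dist_apply_geodesic_le hX hγ hx hy ht
  · exact hX.dist_geodesic_le hL hγ q

end IsCoarseRetraction

/-- A bound for the distance between the Gromov center of a triple in a geodesic `δ`-hyperbolic
space and its median, for any `C`-coarse median: the factor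
`geodesicDisplacementBound δ C + (C + 1) * (3 * δ) + C` bounds the displacement of the center by
the projections to the three median intervals. -/
noncomputable def centerMedianBound (δ C : ℝ) : ℝ :=
  (C + 1) * ((C + 1) * (geodesicDisplacementBound δ C + (C + 1) * (3 * δ) + C) + 2 * C) +
    2 * C + (C * C + C)

lemma centerMedianBound_nonneg {δ C : ℝ} (hδ : 0 ≤ δ) (hC : 0 ≤ C) :
    0 ≤ centerMedianBound δ C := by
  unfold centerMedianBound geodesicDisplacementBound
  positivity

namespace IsCoarseMedian

variable {X : Type*} [MetricSpace X] {δ C : ℝ} {μ : X → X → X → X}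

lemma swap_left (h : IsCoarseMedian C μ) (x y z : X) : μ x y z = μ y x z := h.1 x y z

lemma swap_right (h : IsCoarseMedian C μ) (x y z : X) : μ x y z = μ x z y := h.2.1 x y z

lemma apply_self_left (h : IsCoarseMedian C μ) (x y : X) : μ x x y = x := h.2.2.1 x y

lemma apply_self_outer (h : IsCoarseMedian C μ) (x y : X) : μ x y x = x := by
  rw [h.swap_right, h.apply_self_left]

lemma apply_self_right (h : IsCoarseMedian C μ) (x y : X) : μ x y y = y := by
  rw [h.swap_left, h.apply_self_outer]

lemma dist_assoc_le (h : IsCoarseMedian C μ) (w x y z : X) :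
    dist (μ w (μ w x y) z) (μ w x (μ w y z)) ≤ C := by
  simpa only [h.swap_left _ w] using h.2.2.2.1 x y z w

lemma dist_third_le (h : IsCoarseMedian C μ) (x y z w : X) :
    dist (μ x y z) (μ x y w) ≤ C * dist z w + C := by
  rw [h.swap_right x y z, h.swap_left x z, h.swap_right x y w, h.swap_left x w]
  exact h.2.2.2.2 z x y w

lemma isCoarseRetraction (h : IsCoarseMedian C μ) (x y : X) : IsCoarseRetraction C (μ x y) where
  dist_le := h.dist_third_le x y
  dist_apply_apply_le z := by
    simpa only [h.apply_self_right, h.swap_left y x] using h.dist_assoc_le y x x z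

/-- With `x * y = μ w x y`, the argument is `q ≈ b * q ≈ b * (a * q) ≈ (b * a) * q`. -/
lemma dist_apply_median_le (h : IsCoarseMedian C μ) {w a b q : X} {F : ℝ}
    (ha : dist q (μ w a q) ≤ F) (hb : dist q (μ w b q) ≤ F) :
    dist q (μ w (μ w a b) q) ≤ (C + 1) * F + 2 * C := by
  have : Nonempty X := ⟨q⟩
  have hC := (h.isCoarseRetraction w w).nonneg
  have hassoc : dist (μ w b (μ w a q)) (μ w (μ w a b) q) ≤ C := by
    rw [h.swap_right w a b, dist_comm]
    exact h.dist_assoc_le w b a q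
  have hmove : dist (μ w b q) (μ w b (μ w a q)) ≤ C * F + C :=
    (h.dist_third_le w b q (μ w a q)).trans (by gcongr)
  linarith [dist_triangle4 q (μ w b q) (μ w b (μ w a q)) (μ w (μ w a b) q)]

lemma dist_median_le_of_dist_apply_le (h : IsCoarseMedian C μ) {x y z q : X} {F : ℝ}
    (hxy : dist q (μ x y q) ≤ F) (hxz : dist q (μ x z q) ≤ F) (hyz : dist q (μ y z q) ≤ F) :
    dist q (μ x y z) ≤ (C + 1) * ((C + 1) * F + 2 * C) + 2 * C + (C * C + C) := by
  have : Nonempty X := ⟨q⟩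
  have hC := (h.isCoarseRetraction x y).nonneg
  let m := μ x y z
  have hx : dist q (μ m x q) ≤ (C + 1) * F + 2 * C := by
    rw [h.swap_left m x]
    exact h.dist_apply_median_le hxy hxz
  have hy : dist q (μ m y q) ≤ (C + 1) * F + 2 * C := by
    rw [h.swap_left m y, show m = μ y x z from h.swap_left x y z]
    exact h.dist_apply_median_le (by rwa [h.swap_left]) hyz
  have hm : dist m (μ m x y) ≤ C := by
    rw [h.swap_left m x, h.swap_right x m]
    exact (h.isCoarseRetraction x y).dist_apply_apply_le z
  have hclose : dist (μ m (μ m x y) q) m ≤ C * C + C := by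
    calc dist (μ m (μ m x y) q) m = dist (μ m q (μ m x y)) (μ m q m) := by
          rw [h.swap_right m q, h.apply_self_outer]
      _ ≤ C * dist (μ m x y) m + C := h.dist_third_le _ _ _ _
      _ ≤ C * C + C := by rw [dist_comm]; gcongr
  linarith [dist_triangle q (μ m (μ m x y) q) m, h.dist_apply_median_le hx hy]

lemma dist_median_le_of_gromovProd_le (h : IsCoarseMedian C μ) (hX : IsDeltaHyperbolic X δ)
    (hG : IsGeodesicSpace X) {x y z q : X} (hxy : gromovProd q x y ≤ δ)
    (hxz : gromovProd q x z ≤ δ) (hyz : gromovProd q y z ≤ δ) :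
    dist q (μ x y z) ≤ centerMedianBound δ C := by
  have : Nonempty X := ⟨q⟩
  have hC := (h.isCoarseRetraction x y).nonneg
  have hside : ∀ a b, gromovProd q a b ≤ δ →
      dist q (μ a b q) ≤ geodesicDisplacementBound δ C + (C + 1) * (3 * δ) + C := by
    intro a b hab
    refine ((h.isCoarseRetraction a b).dist_apply_le_of_fixed hX hG (h.apply_self_outer a b)
      (h.apply_self_right a b) q).trans ?_
    gcongr
    linarith
  exact h.dist_median_le_of_dist_apply_le (hside x y hxy) (hside x z hxz) (hside y z hyz)

lemma dist_median_median_le (hμ : IsCoarseMedian C μ) {C' : ℝ} {ν : X → X → X → X}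
    (hν : IsCoarseMedian C' ν) (hX : IsDeltaHyperbolic X δ) (hG : IsGeodesicSpace X) (x y z : X) :
    dist (μ x y z) (ν x y z) ≤ centerMedianBound δ C + centerMedianBound δ C' := by
  obtain ⟨q, hxy, hxz, hyz⟩ := hX.exists_gromovProd_le hG x y z
  exact (dist_triangle_left _ _ q).trans (add_le_add
    (hμ.dist_median_le_of_gromovProd_le hX hG hxy hxz hyz)
    (hν.dist_median_le_of_gromovProd_le hX hG hxy hxz hyz))

end IsCoarseMedian

/-- Corollary 3.2: any two `C`-coarse medians on a geodesic `δ`-hyperbolic space are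
`D(δ, C)`-close; in particular, every geodesic hyperbolic space has a unique coarse median
structure. -/
theorem hyperbolic_unique_coarse_median :
    (∀ δ C : ℝ, 0 ≤ δ → 1 ≤ C → ∃ D : ℝ, 0 ≤ D ∧
      ∀ (X : Type u) [MetricSpace X], IsGeodesicSpace X → IsDeltaHyperbolic X δ →
        ∀ μ ν : X → X → X → X, IsCoarseMedian C μ → IsCoarseMedian C ν →
          ∀ x y z : X, dist (μ x y z) (ν x y z) ≤ D) ∧
    (∀ (X : Type u) [MetricSpace X], IsGeodesicSpace X →
      (∃ δ : ℝ, 0 ≤ δ ∧ IsDeltaHyperbolic X δ) →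
        ∀ (C C' : ℝ) (μ ν : X → X → X → X), 1 ≤ C → 1 ≤ C' →
          IsCoarseMedian C μ → IsCoarseMedian C' ν →
            ∃ D : ℝ, ∀ x y z : X, dist (μ x y z) (ν x y z) ≤ D) := by
  refine ⟨fun δ C hδ hC => ⟨centerMedianBound δ C + centerMedianBound δ C, ?_, ?_⟩, ?_⟩
  · have := centerMedianBound_nonneg hδ (zero_le_one.trans hC)
    positivity
  · exact fun X _ hG hX μ ν hμ hν => hμ.dist_median_median_le hν hX hG
  · rintro X _ hG ⟨δ, -, hX⟩ C C' μ ν - - hμ hν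
    exact ⟨_, hμ.dist_median_median_le hν hX hG⟩
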